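/- Let m ≥ r ≥ 2 be integers and let F be a nondegenerate r-graph on m vertices. Suppose there exists a constant c > 0 such that for all sufficiently large n: (a) F is (c·C(n,r−1), ((1−π(F))/(4m))·C(n,r−1))-bounded, and (b) ex(n,F) is ((1−π(F))/(8m))·C(n,r−1)-smooth. Then there exists N_0 such that for all integers n ≥ N_0 and all integers t with 0 ≤ t ≤ min{ c·n/(4·e·r·m), (1−π(F))·n/(64·r·m²) }, the following holds: if H_1, …, H_{t+1} are n-vertex r-graphs on the same vertex set satisfying |H_i| > C(n,r) − C(n−t,r) + ex(n−t,F) for all i ∈ [t+1], then {H_1, …, H_{t+1}} contains a rainbow F-matching. -/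

import Mathlib

open Filter

namespace DensityCH

/-- An `r`-uniform hypergraph with vertices in `ℕ`:
a finite vertex set together with a set of `r`-element edges. -/
structure HGraph (r : ℕ) where
  verts : Finset ℕ
  edges : Finset (Finset ℕ)
  edges_sub : ∀ e ∈ edges, e ⊆ verts
  edges_card : ∀ e ∈ edges, e.card = r

namespace HGraph

/-- Build an `r`-graph from a vertex set and a set of candidate edges,
keeping exactly the well-formed candidates. -/
def ofEdges (r : ℕ) (V : Finset ℕ) (E : Finset (Finset ℕ)) : HGraph r where
  verts := V
  edges := E.filter fun e => e ⊆ V ∧ e.card = r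
  edges_sub := fun e he => ((Finset.mem_filter.mp he).2).1
  edges_card := fun e he => ((Finset.mem_filter.mp he).2).2

variable {r : ℕ}

/-- `H` contains a copy of `F`, i.e. a subgraph isomorphic to `F`. -/
def IsCopyIn (F H : HGraph r) : Prop :=
  ∃ f : ℕ → ℕ, Set.InjOn f ↑F.verts ∧ (∀ v ∈ F.verts, f v ∈ H.verts) ∧
    ∀ e ∈ F.edges, e.image f ∈ H.edges

/-- The subgraph of `H` induced on `S`. -/
def induce (H : HGraph r) (S : Finset ℕ) : HGraph r :=
  ofEdges r (H.verts ∩ S) (H.edges.filter fun e => e ⊆ S)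

/-- Delete a vertex from `H`. -/
def deleteVert (H : HGraph r) (v : ℕ) : HGraph r :=
  ofEdges r (H.verts.erase v) (H.edges.filter fun e => v ∉ e)

/-- The degree of a vertex. -/
def deg (H : HGraph r) (v : ℕ) : ℕ := (H.edges.filter fun e => v ∈ e).card

/-- The maximum degree `Δ(H)`. -/
def maxDeg (H : HGraph r) : ℕ := H.verts.sup H.deg

/-- The minimum degree `δ(H)`. -/
def minDeg (H : HGraph r) : ℕ :=
  if h : H.verts.Nonempty then H.verts.inf' h H.deg else 0

/-- The average degree `d(H) = r·|E(H)|/|V(H)|`. -/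
noncomputable def avgDeg (H : HGraph r) : ℝ :=
  (r : ℝ) * (H.edges.card : ℝ) / (H.verts.card : ℝ)

/-- `H` contains `k` pairwise vertex-disjoint copies of `F`, i.e. `ν(F,H) ≥ k`. -/
def HasMatching (F H : HGraph r) (k : ℕ) : Prop :=
  ∃ S : Fin k → Finset ℕ,
    (∀ i, S i ⊆ H.verts ∧ (S i).card = F.verts.card) ∧
    (∀ i j, i ≠ j → Disjoint (S i) (S j)) ∧
    ∀ i, F.IsCopyIn (H.induce (S i))

/-- Isomorphism of hypergraphs. -/
def Iso (G H : HGraph r) : Prop :=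
  ∃ f : ℕ → ℕ, Set.BijOn f ↑G.verts ↑H.verts ∧
    ∀ e ∈ Finset.powersetCard r G.verts, (e ∈ G.edges ↔ e.image f ∈ H.edges)

/-- The join `G ⋈ H`: all edges of `G`, all edges of `H`, and all `r`-sets meeting
both vertex sets. -/
def join (G H : HGraph r) : HGraph r :=
  ofEdges r (G.verts ∪ H.verts)
    (G.edges ∪ H.edges ∪ ((Finset.powersetCard r (G.verts ∪ H.verts)).filter
      fun e => (e ∩ G.verts).Nonempty ∧ (e ∩ H.verts).Nonempty))

end HGraph

/-- The complete `r`-graph on a vertex set `S`. -/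
def completeOn (r : ℕ) (S : Finset ℕ) : HGraph r :=
  HGraph.ofEdges r S (Finset.powersetCard r S)

/-- The `r`-graph on `V` with no edges. -/
def emptyOn (r : ℕ) (V : Finset ℕ) : HGraph r := HGraph.ofEdges r V ∅

/-- The Turán number `ex(n,F)`. -/
noncomputable def exN (r n : ℕ) (F : HGraph r) : ℕ :=
  sSup {m | ∃ H : HGraph r, H.verts.card = n ∧ ¬ F.IsCopyIn H ∧ H.edges.card = m}

/-- `d(n,F) = r·ex(n,F)/n`. -/
noncomputable def dN (r n : ℕ) (F : HGraph r) : ℝ := (r : ℝ) * (exN r n F : ℝ) / (n : ℝ)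

/-- `δ(n,F) = ex(n,F) − ex(n−1,F)` (as a real number). -/
noncomputable def deltaN (r n : ℕ) (F : HGraph r) : ℝ := (exN r n F : ℝ) - (exN r (n-1) F : ℝ)

/-- `x` is the Turán density `π(F)`, i.e. the limit of `ex(n,F)/C(n,r)`. -/
def HasTuranDensity (r : ℕ) (F : HGraph r) (x : ℝ) : Prop :=
  Tendsto (fun n : ℕ => (exN r n F : ℝ) / (n.choose r : ℝ)) atTop (nhds x)

/-- `ex(n,(t+1)F)`: the maximum number of edges of an `n`-vertex `r`-graph with no
`t+1` pairwise vertex-disjoint copies of `F`. -/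
noncomputable def exMatchN (r n t : ℕ) (F : HGraph r) : ℕ :=
  sSup {m | ∃ H : HGraph r, H.verts.card = n ∧ ¬ F.HasMatching H (t+1) ∧ H.edges.card = m}

/-- `H ∈ EX(n,F)`. -/
def IsExtremalFree (r n : ℕ) (F H : HGraph r) : Prop :=
  H.verts.card = n ∧ ¬ F.IsCopyIn H ∧ H.edges.card = exN r n F

/-- `H ∈ EX(n,(t+1)F)`. -/
def IsExtremalMatchingFree (r n t : ℕ) (F H : HGraph r) : Prop :=
  H.verts.card = n ∧ ¬ F.HasMatching H (t+1) ∧ H.edges.card = exMatchN r n t F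

/-- `F` is `(f1, f2)`-bounded at `n`. -/
def BoundedAt (r n : ℕ) (F : HGraph r) (f1 f2 : ℝ) : Prop :=
  ∀ H : HGraph r, H.verts.card = n → ¬ F.IsCopyIn H →
    dN r n F - f1 ≤ H.avgDeg → (H.maxDeg : ℝ) ≤ dN r n F + f2

/-- `ex(·,F)` is `g`-smooth at `n`: `|δ(n,F) − d(n−1,F)| ≤ g(n)`. -/
def SmoothAt (r n : ℕ) (F : HGraph r) (g : ℝ) : Prop :=
  |deltaN r n F - dN r (n-1) F| ≤ g

/-- The collection `H 0, …, H t` (on a common vertex set) has a rainbow `F`-matching. -/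
def HasRainbowMatching (r t : ℕ) (F : HGraph r) (H : Fin (t+1) → HGraph r) : Prop :=
  ∃ S : Fin (t+1) → Finset ℕ,
    (∀ i, S i ⊆ (H i).verts ∧ (S i).card = F.verts.card) ∧
    (∀ i j, i ≠ j → Disjoint (S i) (S j)) ∧
    ∀ i, F.IsCopyIn ((H i).induce (S i))

/-!  Patterns -/

/-- An `r`-uniform pattern: a finite index set together with a collection of
`r`-multisets on it. -/
structure Pattern (r : ℕ) where
  idx : Finset ℕ
  mE : Finset (Multiset ℕ)
  card_eq : ∀ s ∈ mE, Multiset.card s = r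
  mem_idx : ∀ s ∈ mE, ∀ i ∈ s, i ∈ idx

namespace Pattern

variable {r : ℕ}

/-- The pattern `P − i`. -/
def erase (P : Pattern r) (i : ℕ) : Pattern r where
  idx := P.idx.erase i
  mE := P.mE.filter fun s => i ∉ s
  card_eq := fun s hs => P.card_eq s (Finset.mem_filter.mp hs).1
  mem_idx := by
    intro s hs j hj
    have h1 := Finset.mem_filter.mp hs
    refine Finset.mem_erase.mpr ⟨?_, P.mem_idx s h1.1 j hj⟩
    rintro rfl
    exact h1.2 hj

/-- `H` is a `P`-construction: a blowup of the pattern `P`. -/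
def IsConstruction (P : Pattern r) (H : HGraph r) : Prop :=
  ∃ part : ℕ → ℕ, (∀ v ∈ H.verts, part v ∈ P.idx) ∧
    ∀ e : Finset ℕ, e ∈ H.edges ↔ (e ⊆ H.verts ∧ e.card = r ∧ Multiset.map part e.val ∈ P.mE)

/-- `H` is a `P`-subconstruction: a subgraph of a `P`-construction. -/
def IsSubconstruction (P : Pattern r) (H : HGraph r) : Prop :=
  ∃ G : HGraph r, P.IsConstruction G ∧ H.verts ⊆ G.verts ∧ H.edges ⊆ G.edges

end Pattern

/-- `Λ(P,n)`: the maximum number of edges of an `n`-vertex `P`-construction. -/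
noncomputable def patEx (r : ℕ) (P : Pattern r) (n : ℕ) : ℕ :=
  sSup {m | ∃ H : HGraph r, P.IsConstruction H ∧ H.verts.card = n ∧ H.edges.card = m}

/-- The Lagrangian `λ(P) = lim Λ(P,n)/C(n,r)`. -/
noncomputable def patLagrangian (r : ℕ) (P : Pattern r) : ℝ :=
  limUnder atTop fun n : ℕ => (patEx r P n : ℝ) / (n.choose r : ℝ)

/-- The pattern `P` is minimal: `λ(P−i) < λ(P)` for all `i`. -/
def Pattern.Minimal {r : ℕ} (P : Pattern r) : Prop :=
  ∀ i ∈ P.idx, patLagrangian r (P.erase i) < patLagrangian r P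

/-- `(F,P)` is a Turán pair. -/
def IsTuranPair (r : ℕ) (F : HGraph r) (P : Pattern r) : Prop :=
  (∀ H : HGraph r, P.IsConstruction H → ¬ F.IsCopyIn H) ∧
  (∀ H : HGraph r, ¬ F.IsCopyIn H → H.edges.card = exN r H.verts.card F →
    P.IsConstruction H)

/-- `F` is edge-stable with respect to `P` (with Turán density `π`). -/
def EdgeStable (r : ℕ) (F : HGraph r) (P : Pattern r) (π : ℝ) : Prop :=
  ∀ δ : ℝ, 0 < δ → ∃ N₀ : ℕ, ∃ ζ : ℝ, 0 < ζ ∧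
    ∀ H : HGraph r, N₀ ≤ H.verts.card → ¬ F.IsCopyIn H →
      (π - ζ) * (H.verts.card.choose r : ℝ) ≤ (H.edges.card : ℝ) →
      ∃ H' : HGraph r, H'.verts ⊆ H.verts ∧ H'.edges ⊆ H.edges ∧
        (π - δ) * (H.verts.card.choose r : ℝ) ≤ (H'.edges.card : ℝ) ∧
        P.IsSubconstruction H'

/-- `F` is weakly vertex-extendable with respect to `P` (with Turán density `π`). -/
def WeaklyVertexExtendable (r : ℕ) (F : HGraph r) (P : Pattern r) (π : ℝ) : Prop :=
  ∀ δ : ℝ, 0 < δ → ∃ N₀ : ℕ, ∃ ζ : ℝ, 0 < ζ ∧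
    ∀ H : HGraph r, N₀ ≤ H.verts.card → ¬ F.IsCopyIn H →
      (π - ζ) * (((H.verts.card - 1).choose (r-1) : ℕ) : ℝ) ≤ (H.minDeg : ℝ) →
      ∀ v ∈ H.verts, P.IsSubconstruction (H.deleteVert v) →
        (H.deg v : ℝ) ≤ (π + δ) * (((H.verts.card - 1).choose (r-1) : ℕ) : ℝ)

/-- `F` is degree-stable with respect to `P` (with Turán density `π`). -/
def DegreeStable (r : ℕ) (F : HGraph r) (P : Pattern r) (π : ℝ) : Prop :=
  ∃ ζ : ℝ, 0 < ζ ∧ ∃ N₀ : ℕ,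
    ∀ H : HGraph r, N₀ ≤ H.verts.card → ¬ F.IsCopyIn H →
      (π - ζ) * (((H.verts.card - 1).choose (r-1) : ℕ) : ℝ) ≤ (H.minDeg : ℝ) →
      P.IsSubconstruction H

/-!  Concrete constructions -/

/-- The generalized Turán graph `T_r(·,ℓ)` on vertex set `V` (parts are residue
classes mod `ℓ`; on an interval these are balanced). -/
def turanOn (r ℓ : ℕ) (V : Finset ℕ) : HGraph r :=
  HGraph.ofEdges r V ((Finset.powersetCard r V).filter
    fun e => ∀ u ∈ e, ∀ v ∈ e, u % ℓ = v % ℓ → u = v)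

/-- The `r`-graph on `V₁ ∪ V₂` whose edges are all `r`-sets meeting both parts. -/
def crossOn (r : ℕ) (V₁ V₂ : Finset ℕ) : HGraph r :=
  HGraph.ofEdges r (V₁ ∪ V₂) ((Finset.powersetCard r (V₁ ∪ V₂)).filter
    fun e => (e ∩ V₁).Nonempty ∧ (e ∩ V₂).Nonempty)

/-- The `r`-graph on `V₁ ∪ V₂` whose edges are all `r`-sets meeting `V₁` in an odd
number of vertices. -/
def oddCross (r : ℕ) (V₁ V₂ : Finset ℕ) : HGraph r :=
  HGraph.ofEdges r (V₁ ∪ V₂) ((Finset.powersetCard r (V₁ ∪ V₂)).filter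
    fun e => Odd (e ∩ V₁).card)

/-- The Fano plane. -/
def fano : HGraph 3 :=
  HGraph.ofEdges 3 (Finset.Icc 1 7)
    {({1,2,3} : Finset ℕ), {3,4,5}, {5,6,1}, {1,7,4}, {2,7,5}, {3,7,6}, {2,4,6}}

/-- The generalized triangle `𝕋_r`, with edges `{1,…,r}`, `{1,…,r−1,r+1}` and
`{r,…,2r−1}`. -/
def genTri (r : ℕ) : HGraph r :=
  HGraph.ofEdges r (Finset.Icc 1 (2*r - 1))
    {Finset.Icc 1 r, Finset.Icc 1 (r-1) ∪ {r+1}, Finset.Icc r (2*r - 1)}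

/-- `G` is a blowup of the `r`-graph `W` (viewing `W` as a pattern). -/
def IsBlowupOf {r : ℕ} (W G : HGraph r) : Prop :=
  ∃ part : ℕ → ℕ, (∀ v ∈ G.verts, part v ∈ W.verts) ∧
    ∀ e : Finset ℕ, e ∈ G.edges ↔
      (e ⊆ G.verts ∧ e.card = r ∧ ∃ f ∈ W.edges, Multiset.map part e.val = f.val)

/-- The expansion `H^F` of an `r`-graph `F`: for every pair of vertices not covered
by an edge of `F`, add an edge consisting of this pair plus `r−2` new vertices,
these sets of new vertices being pairwise disjoint. -/
def HGraph.expansion {r : ℕ} (F : HGraph r) : HGraph r :=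
  HGraph.ofEdges r
    (F.verts ∪ (((F.verts ×ˢ F.verts).filter fun p =>
        p.1 < p.2 ∧ ∀ e ∈ F.edges, ¬ (p.1 ∈ e ∧ p.2 ∈ e)).biUnion fun p =>
      (Finset.range (r-2)).image fun s =>
        (F.verts.sup id + 1) + (p.1 * (F.verts.sup id + 1) + p.2) * r + s))
    (F.edges ∪ (((F.verts ×ˢ F.verts).filter fun p =>
        p.1 < p.2 ∧ ∀ e ∈ F.edges, ¬ (p.1 ∈ e ∧ p.2 ∈ e)).image fun p =>
      insert p.1 (insert p.2 ((Finset.range (r-2)).image fun s =>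
        (F.verts.sup id + 1) + (p.1 * (F.verts.sup id + 1) + p.2) * r + s))))

/-- A `2`-graph is a tree on `k` vertices: `k` vertices, `k−1` edges, connected. -/
def IsTreeGraph (k : ℕ) (T : HGraph 2) : Prop :=
  T.verts.card = k ∧ T.edges.card = k - 1 ∧
  ∀ S : Finset ℕ, S ⊆ T.verts → S.Nonempty → S ≠ T.verts →
    ∃ e ∈ T.edges, (e ∩ S).Nonempty ∧ (e \ S).Nonempty

/-- `T` satisfies the Erdős–Sós property for `k`: every graph with average degree
greater than `k−2` contains `T`. -/
def ErdosSos (k : ℕ) (T : HGraph 2) : Prop :=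
  ∀ G : HGraph 2, ((k : ℝ) - 2) * (G.verts.card : ℝ) < 2 * (G.edges.card : ℝ) →
    T.IsCopyIn G

/-- The `(r−2)`-expansion `Exp(T)` of a `2`-graph `T`: enlarge every edge by one
common fixed set of `r−2` new vertices. -/
def expTree (r : ℕ) (T : HGraph 2) : HGraph r :=
  HGraph.ofEdges r
    (T.verts ∪ ((Finset.range (r-2)).image fun s => T.verts.sup id + 1 + s))
    (T.edges.image fun e =>
      e ∪ ((Finset.range (r-2)).image fun s => T.verts.sup id + 1 + s))

/-- The chromatic number of a `2`-graph. -/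
noncomputable def chrom (F : HGraph 2) : ℕ :=
  sInf {k | ∃ c : ℕ → ℕ, (∀ v ∈ F.verts, c v < k) ∧
    ∀ e ∈ F.edges, ∀ u ∈ e, ∀ v ∈ e, u ≠ v → c u ≠ c v}

/-- A graph is edge-critical if deleting some edge lowers its chromatic number. -/
def EdgeCritical (F : HGraph 2) : Prop :=
  ∃ e ∈ F.edges, chrom (HGraph.ofEdges 2 F.verts (F.edges.erase e)) < chrom F

/-- `H` is semibipartite: the vertex set splits into `V₁ ∪ V₂` so that every edge
has exactly one vertex in `V₁`. -/
def Semibipartite (r : ℕ) (H : HGraph r) : Prop :=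
  ∃ V₁ ⊆ H.verts, ∀ e ∈ H.edges, (e ∩ V₁).card = 1

/-- `H` is a `K_ℓ^r`-subconstruction, i.e. an `ℓ`-partite `r`-graph. -/
def IsKlSub (r ℓ : ℕ) (H : HGraph r) : Prop :=
  ∃ f : ℕ → ℕ, (∀ v ∈ H.verts, f v < ℓ) ∧
    ∀ e ∈ H.edges, ∀ u ∈ e, ∀ v ∈ e, f u = f v → u = v

/-- The Lagrangian `λ(W)` of an `r`-graph `W`, viewing `W` as a pattern. -/
noncomputable def hgLagrangian (r : ℕ) (W : HGraph r) : ℝ :=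
  limUnder atTop fun n : ℕ =>
    ((sSup {m | ∃ G : HGraph r, IsBlowupOf W G ∧ G.verts.card = n ∧ G.edges.card = m} : ℕ) : ℝ)
      / (n.choose r : ℝ)

/-- The `r`-graph `B(r,ℓ+1)`. -/
def BGraph (r ℓ : ℕ) : HGraph r :=
  HGraph.ofEdges r (Finset.Icc 1 (ℓ+1))
    (insert (Finset.Icc 1 r)
      ((Finset.powersetCard r (Finset.Icc 2 (ℓ+1))).filter
        fun e => (e ∩ Finset.Icc 2 r).card ≤ 1))

/-- The `r`-uniform matching of size two, `M_2^r`. -/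
def matching2 (r : ℕ) : HGraph r :=
  HGraph.ofEdges r (Finset.Icc 1 (2*r)) {Finset.Icc 1 r, Finset.Icc (r+1) (2*r)}

/-- The expanded triangle `𝓒_3^{2r}`. -/
def expandedTriangle (r : ℕ) : HGraph (2*r) :=
  HGraph.ofEdges (2*r) (Finset.Icc 1 (3*r))
    {Finset.Icc 1 (2*r), Finset.Icc (r+1) (3*r), Finset.Icc 1 r ∪ Finset.Icc (2*r+1) (3*r)}

/-- The `4`-graph `𝔽_{4,3}`. -/
def F43 : HGraph 4 :=
  HGraph.ofEdges 4 (Finset.Icc 1 7)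
    {({1,2,3,4} : Finset ℕ), {1,2,3,5}, {1,2,3,6}, {1,2,3,7}, {4,5,6,7}}

/-- The `3`-graph `𝔽_{3,2}`. -/
def F32 : HGraph 3 :=
  HGraph.ofEdges 3 (Finset.Icc 1 5)
    {({1,2,3} : Finset ℕ), {1,2,4}, {1,2,5}, {3,4,5}}

/-- `H` contains pairwise vertex-disjoint copies of `F i`, `ts i` many of each. -/
def HasMixedMatching (r k : ℕ) (F : Fin k → HGraph r) (ts : Fin k → ℕ)
    (H : HGraph r) : Prop :=
  ∃ S : (i : Fin k) → Fin (ts i) → Finset ℕ,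
    (∀ i j, S i j ⊆ H.verts ∧ (S i j).card = (F i).verts.card) ∧
    (∀ p q : Σ i : Fin k, Fin (ts i), p ≠ q → Disjoint (S p.1 p.2) (S q.1 q.2)) ∧
    ∀ i j, (F i).IsCopyIn (H.induce (S i j))

/-- `ex(n, ⊔ᵢ tᵢ Fᵢ)`. -/
noncomputable def exMixedN (r k : ℕ) (F : Fin k → HGraph r) (ts : Fin k → ℕ)
    (n : ℕ) : ℕ :=
  sSup {m | ∃ H : HGraph r, H.verts.card = n ∧ ¬ HasMixedMatching r k F ts H ∧
    H.edges.card = m}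

/-- `ex(n, {F₁,…,F_k})`. -/
noncomputable def exFamN (r k : ℕ) (F : Fin k → HGraph r) (n : ℕ) : ℕ :=
  sSup {m | ∃ H : HGraph r, H.verts.card = n ∧ (∀ i, ¬ (F i).IsCopyIn H) ∧
    H.edges.card = m}


namespace HGraph

/-- Delete a set of vertices. -/
def rest {r : ℕ} (H : HGraph r) (B : Finset ℕ) : HGraph r :=
  ofEdges r (H.verts \ B) (H.edges.filter fun e => Disjoint e B)

theorem mem_rest_edges {r : ℕ} (H : HGraph r) (B : Finset ℕ) (e : Finset ℕ) :
    e ∈ (H.rest B).edges ↔ e ∈ H.edges ∧ Disjoint e B := by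
  simp only [rest, ofEdges, Finset.mem_filter]
  constructor
  · rintro ⟨h, _⟩
    exact h
  · rintro ⟨h1, h2⟩
    exact ⟨⟨h1, h2⟩, Finset.subset_sdiff.mpr ⟨H.edges_sub e h1, h2⟩, H.edges_card e h1⟩

theorem rest_edges {r : ℕ} (H : HGraph r) (B : Finset ℕ) :
    (H.rest B).edges = H.edges.filter fun e => Disjoint e B := by
  ext e
  rw [mem_rest_edges, Finset.mem_filter]

theorem rest_verts {r : ℕ} (H : HGraph r) (B : Finset ℕ) :
    (H.rest B).verts = H.verts \ B := rfl

theorem copy_rest {r : ℕ} (F H : HGraph r) (B : Finset ℕ) (h : F.IsCopyIn (H.rest B)) :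
    ∃ S : Finset ℕ, S ⊆ H.verts ∧ Disjoint S B ∧ S.card = F.verts.card ∧
      F.IsCopyIn (H.induce S) := by
  obtain ⟨f, hinj, hv, he⟩ := h
  have hS : F.verts.image f ⊆ H.verts \ B := by
    intro x hx
    obtain ⟨v, hvF, rfl⟩ := Finset.mem_image.mp hx
    exact hv v hvF
  refine ⟨F.verts.image f, hS.trans Finset.sdiff_subset, (Finset.subset_sdiff.mp hS).2,
    Finset.card_image_of_injOn hinj, f, hinj, ?_, ?_⟩
  · intro v hvF
    have h1 := Finset.mem_image_of_mem f hvF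
    have h2 := hS h1
    simp only [induce, ofEdges, Finset.mem_inter]
    exact ⟨(Finset.mem_sdiff.mp h2).1, h1⟩
  · intro e heF
    have h1 := (mem_rest_edges _ _ _).mp (he e heF)
    have h2 : e.image f ⊆ F.verts.image f := Finset.image_subset_image (F.edges_sub e heF)
    simp only [induce, ofEdges, Finset.mem_filter]
    exact ⟨⟨h1.1, h2⟩, Finset.subset_inter (H.edges_sub _ h1.1) h2, H.edges_card _ h1.1⟩

theorem edges_card_le {r : ℕ} (H : HGraph r) : H.edges.card ≤ H.verts.card.choose r := by
  rw [← Finset.card_powersetCard]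
  apply Finset.card_le_card
  intro e he
  exact Finset.mem_powersetCard.mpr ⟨H.edges_sub e he, H.edges_card e he⟩

theorem card_filter_mem_powersetCard (V : Finset ℕ) (v : ℕ) (hv : v ∈ V) (q : ℕ) :
    ((Finset.powersetCard (q+1) V).filter fun e => v ∈ e).card ≤ (V.card - 1).choose q := by
  have : ((Finset.powersetCard (q+1) V).filter fun e => v ∈ e).card
      ≤ (Finset.powersetCard q (V.erase v)).card := by
    apply Finset.card_le_card_of_injOn (fun e => e.erase v)
    · intro e he
      have he := Finset.mem_filter.mp (Finset.mem_coe.mp he)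
      have h1 := Finset.mem_powersetCard.mp he.1
      refine Finset.mem_coe.mpr (Finset.mem_powersetCard.mpr
        ⟨Finset.erase_subset_erase _ h1.1, ?_⟩)
      simp only
      rw [Finset.card_erase_of_mem he.2, h1.2]
      rfl
    · intro e he e' he' h
      have he := Finset.mem_filter.mp (Finset.mem_coe.mp he)
      have he' := Finset.mem_filter.mp (Finset.mem_coe.mp he')
      simp only at h
      rw [← Finset.insert_erase he.2, ← Finset.insert_erase he'.2, h]
  rwa [Finset.card_powersetCard, Finset.card_erase_of_mem hv] at this

theorem deg_le {r : ℕ} (hr : 1 ≤ r) (H : HGraph r) (v : ℕ) (hv : v ∈ H.verts) :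
    H.deg v ≤ (H.verts.card - 1).choose (r-1) := by
  obtain ⟨q, rfl⟩ : ∃ q, r = q + 1 := ⟨r - 1, by omega⟩
  refine le_trans (Finset.card_le_card ?_) (card_filter_mem_powersetCard H.verts v hv q)
  intro e he
  have he := Finset.mem_filter.mp he
  exact Finset.mem_filter.mpr ⟨Finset.mem_powersetCard.mpr
    ⟨H.edges_sub e he.1, H.edges_card e he.1⟩, he.2⟩

theorem codeg_le {r : ℕ} (hr : 2 ≤ r) (H : HGraph r) (v u : ℕ) (hv : v ∈ H.verts)
    (hu : u ∈ H.verts) (huv : u ≠ v) :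
    (H.edges.filter fun e => v ∈ e ∧ u ∈ e).card ≤ (H.verts.card - 2).choose (r-2) := by
  obtain ⟨q, rfl⟩ : ∃ q, r = q + 2 := ⟨r - 2, by omega⟩
  have key := card_filter_mem_powersetCard (H.verts.erase v) u
    (Finset.mem_erase.mpr ⟨huv, hu⟩) q
  rw [Finset.card_erase_of_mem hv] at key
  refine le_trans ?_ key
  apply Finset.card_le_card_of_injOn (fun e => e.erase v)
  · intro e he
    have he := Finset.mem_filter.mp (Finset.mem_coe.mp he)
    refine Finset.mem_coe.mpr (Finset.mem_filter.mpr ⟨Finset.mem_powersetCard.mpr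
        ⟨Finset.erase_subset_erase _ (H.edges_sub e he.1), ?_⟩,
        Finset.mem_erase.mpr ⟨huv, he.2.2⟩⟩)
    simp only
    rw [Finset.card_erase_of_mem he.2.1, H.edges_card e he.1]
    rfl
  · intro e he e' he' h
    have he := Finset.mem_filter.mp (Finset.mem_coe.mp he)
    have he' := Finset.mem_filter.mp (Finset.mem_coe.mp he')
    simp only at h
    rw [← Finset.insert_erase he.2.1, ← Finset.insert_erase he'.2.1, h]

/-- Deleting a further set `B` costs at most the degree sum. -/
theorem rest_union {r : ℕ} (H : HGraph r) (L B : Finset ℕ) :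
    (H.rest L).edges.card ≤ (H.rest (L ∪ B)).edges.card + ∑ v ∈ B, H.deg v := by
  have h1 : (H.rest L).edges ⊆ (H.rest (L ∪ B)).edges ∪
      B.biUnion (fun v => H.edges.filter fun e => v ∈ e) := by
    intro e he
    rw [mem_rest_edges] at he
    by_cases hB : Disjoint e B
    · apply Finset.mem_union_left
      rw [mem_rest_edges]
      exact ⟨he.1, Finset.disjoint_union_right.mpr ⟨he.2, hB⟩⟩
    · apply Finset.mem_union_right
      obtain ⟨v, hv, hvB⟩ := Finset.not_disjoint_iff.mp hB
      exact Finset.mem_biUnion.mpr ⟨v, hvB, Finset.mem_filter.mpr ⟨he.1, hv⟩⟩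
  calc _ ≤ _ := Finset.card_le_card h1
    _ ≤ _ := Finset.card_union_le _ _
    _ ≤ _ := Nat.add_le_add_left Finset.card_biUnion_le _

theorem rest_empty_card {r : ℕ} (H : HGraph r) : (H.rest ∅).edges = H.edges := by
  rw [rest_edges]
  simp

theorem edges_le_rest {r : ℕ} (hr : 1 ≤ r) (H : HGraph r) (B : Finset ℕ) (hB : B ⊆ H.verts) :
    H.edges.card ≤ (H.rest B).edges.card + B.card * (H.verts.card - 1).choose (r-1) := by
  have h := rest_union H ∅ B
  rw [rest_empty_card, Finset.empty_union] at h
  refine h.trans (Nat.add_le_add_left ?_ _)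
  have := Finset.sum_le_card_nsmul B H.deg _ (fun v hv => deg_le hr H v (hB hv))
  simpa using this

theorem edges_le_rest' {r : ℕ} (H : HGraph r) (B : Finset ℕ) (hB : B ⊆ H.verts) :
    H.edges.card + (H.verts.card - B.card).choose r
      ≤ (H.rest B).edges.card + H.verts.card.choose r := by
  have h1 : (H.edges \ (H.rest B).edges) ∪ Finset.powersetCard r (H.verts \ B)
      ⊆ Finset.powersetCard r H.verts := by
    intro e he
    rcases Finset.mem_union.mp he with h | h
    · have := (Finset.mem_sdiff.mp h).1
      exact Finset.mem_powersetCard.mpr ⟨H.edges_sub e this, H.edges_card e this⟩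
    · exact Finset.powersetCard_mono Finset.sdiff_subset h
  have h2 : Disjoint (H.edges \ (H.rest B).edges) (Finset.powersetCard r (H.verts \ B)) := by
    rw [Finset.disjoint_left]
    intro e he he'
    have h := Finset.mem_sdiff.mp he
    apply h.2
    rw [mem_rest_edges]
    exact ⟨h.1, (Finset.subset_sdiff.mp (Finset.mem_powersetCard.mp he').1).2⟩
  have h3 := Finset.card_le_card h1
  rw [Finset.card_union_of_disjoint h2, Finset.card_powersetCard, Finset.card_powersetCard,
    Finset.card_sdiff_of_subset hB] at h3
  have h4 : (H.rest B).edges ⊆ H.edges := by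
    rw [rest_edges]; exact Finset.filter_subset _ _
  rw [Finset.card_sdiff_of_subset h4] at h3
  have := Finset.card_le_card h4
  omega

theorem deg_le_rest {r : ℕ} (hr : 2 ≤ r) (H : HGraph r) (B : Finset ℕ) (hB : B ⊆ H.verts)
    (v : ℕ) (hv : v ∈ H.verts) (hvB : v ∉ B) :
    H.deg v ≤ (H.rest B).deg v + B.card * (H.verts.card - 2).choose (r-2) := by
  have h1 : (H.edges.filter fun e => v ∈ e) ⊆ ((H.rest B).edges.filter fun e => v ∈ e) ∪
      B.biUnion (fun u => H.edges.filter fun e => v ∈ e ∧ u ∈ e) := by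
    intro e he
    have he := Finset.mem_filter.mp he
    by_cases hB : Disjoint e B
    · apply Finset.mem_union_left
      rw [Finset.mem_filter, mem_rest_edges]
      exact ⟨⟨he.1, hB⟩, he.2⟩
    · apply Finset.mem_union_right
      obtain ⟨u, hu, huB⟩ := Finset.not_disjoint_iff.mp hB
      exact Finset.mem_biUnion.mpr ⟨u, huB, Finset.mem_filter.mpr ⟨he.1, he.2, hu⟩⟩
  have h2 : (B.biUnion (fun u => H.edges.filter fun e => v ∈ e ∧ u ∈ e)).card
      ≤ B.card * (H.verts.card - 2).choose (r-2) := by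
    apply Finset.card_biUnion_le_card_mul
    intro u hu
    exact codeg_le hr H v u hv (hB hu) (fun h => hvB (h ▸ hu))
  calc H.deg v ≤ _ := Finset.card_le_card h1
    _ ≤ _ := Finset.card_union_le _ _
    _ ≤ _ := Nat.add_le_add_left h2 _

theorem deg_le_maxDeg {r : ℕ} (H : HGraph r) (v : ℕ) (hv : v ∈ H.verts) :
    H.deg v ≤ H.maxDeg := Finset.le_sup (f := H.deg) hv

end HGraph

theorem le_exN {r n : ℕ} (F H : HGraph r) (hn : H.verts.card = n) (h : ¬ F.IsCopyIn H) :
    H.edges.card ≤ exN r n F := by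
  apply le_csSup
  · refine ⟨n.choose r, ?_⟩
    rintro k ⟨G, hG, -, rfl⟩
    rw [← hG]
    exact G.edges_card_le
  · exact ⟨H, hn, h, rfl⟩

/-- Low-degree step. -/
theorem stepA {r n l k : ℕ} (F H : HGraph r) (hn : H.verts.card = n) (L B : Finset ℕ)
    (hL : L ⊆ H.verts) (hl : L.card = l) (hB : B ⊆ H.verts) (hBL : Disjoint B L)
    (hBk : B.card ≤ k) (hlk : l + k ≤ n) (D : ℝ)
    (hD : ∀ u ∈ H.verts, u ∉ L → (H.deg u : ℝ) ≤ D)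
    (hbig : (exN r (n - l - k) F : ℝ) + k * D + n.choose r < H.edges.card + (n-l).choose r) :
    ∃ S : Finset ℕ, S ⊆ H.verts ∧ Disjoint S (L ∪ B) ∧ S.card = F.verts.card ∧
      F.IsCopyIn (H.induce S) := by
  obtain ⟨B', hBB', hB'V, hB'c⟩ : ∃ B', B ⊆ B' ∧ B' ⊆ H.verts \ L ∧ B'.card = k := by
    apply Finset.exists_subsuperset_card_eq (Finset.subset_sdiff.mpr ⟨hB, hBL⟩) hBk
    rw [Finset.card_sdiff_of_subset hL]
    omega
  have hB'L := Finset.subset_sdiff.mp hB'V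
  by_cases hc : F.IsCopyIn (H.rest (L ∪ B'))
  · obtain ⟨S, h1, h2, h3, h4⟩ := HGraph.copy_rest F H _ hc
    exact ⟨S, h1, h2.mono_right (Finset.union_subset_union_right hBB'), h3, h4⟩
  · exfalso
    have hcard : (H.rest (L ∪ B')).verts.card = n - l - k := by
      rw [HGraph.rest_verts, Finset.card_sdiff_of_subset (Finset.union_subset hL hB'L.1),
        Finset.card_union_of_disjoint hB'L.2.symm]
      omega
    have h1 := le_exN F _ hcard hc
    have h2 := H.rest_union L B'
    have h3 := H.edges_le_rest' L hL
    rw [hn, hl] at h3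
    have h4 : ((∑ v ∈ B', H.deg v : ℕ) : ℝ) ≤ k * D := by
      push_cast
      have := Finset.sum_le_card_nsmul B' (fun v => (H.deg v : ℝ)) D (fun v hv =>
        hD v (hB'L.1 hv) (Finset.disjoint_left.mp hB'L.2 hv))
      rw [hB'c] at this
      simpa using this
    have h1' : ((H.rest (L ∪ B')).edges.card : ℝ) ≤ exN r (n-l-k) F := by exact_mod_cast h1
    have h2' : ((H.rest L).edges.card : ℝ) ≤ (H.rest (L ∪ B')).edges.card
      + ((∑ v ∈ B', H.deg v : ℕ) : ℝ) := by exact_mod_cast h2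
    have h3' : (H.edges.card : ℝ) + (n-l).choose r ≤ (H.rest L).edges.card + n.choose r := by
      exact_mod_cast h3
    linarith

/-- High-degree step. -/
theorem stepB {r n k : ℕ} (hr : 2 ≤ r) (F H : HGraph r) (hn : H.verts.card = n)
    (B : Finset ℕ) (hB : B ⊆ H.verts) (hBk : B.card ≤ k) (hkn : k + 1 ≤ n)
    (v : ℕ) (hv : v ∈ H.verts) (hvB : v ∉ B) (f1 f2 : ℝ)
    (hbd : BoundedAt r (n-k) F f1 f2)
    (hdeg : dN r (n-k) F + f2 + k * (n-2).choose (r-2) < H.deg v)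
    (hbig : (exN r (n-k) F : ℝ) + k * (n-1).choose (r-1)
      ≤ H.edges.card + f1 * ((n-k : ℕ) : ℝ) / r) :
    ∃ S : Finset ℕ, S ⊆ H.verts ∧ Disjoint S B ∧ S.card = F.verts.card ∧
      F.IsCopyIn (H.induce S) := by
  obtain ⟨B', hBB', hB'V, hB'c⟩ : ∃ B', B ⊆ B' ∧ B' ⊆ H.verts.erase v ∧ B'.card = k := by
    apply Finset.exists_subsuperset_card_eq (Finset.subset_erase.mpr ⟨hB, hvB⟩) hBk
    rw [Finset.card_erase_of_mem hv]
    omega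
  have hB'L := Finset.subset_erase.mp hB'V
  by_cases hc : F.IsCopyIn (H.rest B')
  · obtain ⟨S, h1, h2, h3, h4⟩ := HGraph.copy_rest F H _ hc
    exact ⟨S, h1, h2.mono_right hBB', h3, h4⟩
  · exfalso
    have hcard : (H.rest B').verts.card = n - k := by
      rw [HGraph.rest_verts, Finset.card_sdiff_of_subset hB'L.1, hn, hB'c]
    have h1 := H.edges_le_rest (by omega) B' hB'L.1
    have h2 := H.deg_le_rest hr B' hB'L.1 v hv hB'L.2
    rw [hn, hB'c] at h1 h2
    have h1' : (H.edges.card : ℝ) ≤ (H.rest B').edges.card + k * (n-1).choose (r-1) := by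
      exact_mod_cast h1
    have h2' : (H.deg v : ℝ) ≤ (H.rest B').deg v + k * (n-2).choose (r-2) := by
      exact_mod_cast h2
    have hpos : (0:ℝ) < ((n-k : ℕ) : ℝ) := by
      have : 0 < n - k := by omega
      exact_mod_cast this
    have hrpos : (0:ℝ) < r := by
      have : 0 < r := by omega
      exact_mod_cast this
    have h3 := hbd (H.rest B') hcard hc (by
      unfold HGraph.avgDeg dN
      rw [hcard, sub_le_iff_le_add, div_add' _ _ _ hpos.ne', div_le_div_iff_of_pos_right hpos]
      have h5 : (exN r (n-k) F : ℝ) ≤ (H.rest B').edges.card + f1 * ((n-k : ℕ) : ℝ) / r := by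
        linarith
      have h6 := mul_le_mul_of_nonneg_left h5 hrpos.le
      rw [mul_add, mul_div_cancel₀ _ hrpos.ne'] at h6
      exact h6)
    have h4 := (H.rest B').deg_le_maxDeg v (by
      rw [HGraph.rest_verts]
      exact Finset.mem_sdiff.mpr ⟨hv, hB'L.2⟩)
    have h4' : ((H.rest B').deg v : ℝ) ≤ (H.rest B').maxDeg := by exact_mod_cast h4
    linarith

/-- A maximal partial system of distinct representatives. -/
theorem exists_max_sdr {ι : Type} [Fintype ι] [DecidableEq ι] (P : ι → ℕ → Prop) :
    ∃ (I : Finset ι) (v : ι → ℕ), Set.InjOn v I ∧ (∀ i ∈ I, P i (v i)) ∧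
      ∀ i ∉ I, ∀ u, P i u → u ∈ I.image v := by
  classical
  let Q : Finset ι → Prop := fun I => ∃ v : ι → ℕ, Set.InjOn v I ∧ ∀ i ∈ I, P i (v i)
  have hne : (Finset.univ.filter Q).Nonempty :=
    ⟨∅, Finset.mem_filter.mpr ⟨Finset.mem_univ _, fun _ => 0, by simp, by simp⟩⟩
  obtain ⟨I, hI, hmax⟩ := Finset.exists_max_image _ Finset.card hne
  obtain ⟨v, hv, hP⟩ := (Finset.mem_filter.mp hI).2
  refine ⟨I, v, hv, hP, ?_⟩
  intro i hi u hu
  by_contra hcon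
  have hne : ∀ j ∈ I, j ≠ i := fun j hj h => hi (h ▸ hj)
  have : insert i I ∈ Finset.univ.filter Q := by
    refine Finset.mem_filter.mpr ⟨Finset.mem_univ _, Function.update v i u, ?_, ?_⟩
    · intro a ha b hb hab
      rcases Finset.mem_insert.mp (Finset.mem_coe.mp ha) with rfl | ha'
      · rcases Finset.mem_insert.mp (Finset.mem_coe.mp hb) with rfl | hb'
        · rfl
        · rw [Function.update_self, Function.update_of_ne (hne b hb')] at hab
          exact absurd (Finset.mem_image.mpr ⟨b, hb', hab.symm⟩) hcon
      · rcases Finset.mem_insert.mp (Finset.mem_coe.mp hb) with rfl | hb'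
        · rw [Function.update_self, Function.update_of_ne (hne a ha')] at hab
          exact absurd (Finset.mem_image.mpr ⟨a, ha', hab⟩) hcon
        · rw [Function.update_of_ne (hne a ha'), Function.update_of_ne (hne b hb')] at hab
          exact hv ha' hb' hab
    · intro j hj
      rcases Finset.mem_insert.mp hj with rfl | hj'
      · rw [Function.update_self]; exact hu
      · rw [Function.update_of_ne (hne j hj')]; exact hP j hj'
  have := hmax _ this
  rw [Finset.card_insert_of_notMem hi] at this
  omega

/-- Greedy selection with reserved vertices. -/
theorem greedy {t m : ℕ} (hm : 1 ≤ m) (good : Fin (t+1) → Finset ℕ → Prop)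
    (V : Finset ℕ) (hgood : ∀ i S, good i S → S ⊆ V ∧ S.card = m)
    (I : Finset (Fin (t+1))) (v : Fin (t+1) → ℕ) (hinj : Set.InjOn v I)
    (hvV : ∀ i ∈ I, v i ∈ V)
    (hA : ∀ i ∉ I, ∀ B ⊆ V, Disjoint B (I.image v) → B.card ≤ m * (t - I.card) →
      ∃ S, good i S ∧ Disjoint S (I.image v ∪ B))
    (hB : ∀ i ∈ I, ∀ B ⊆ V, v i ∉ B → B.card ≤ m * t → ∃ S, good i S ∧ Disjoint S B) :
    ∃ S : Fin (t+1) → Finset ℕ, (∀ i, good i (S i)) ∧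
      ∀ i j, i ≠ j → Disjoint (S i) (S j) := by
  classical
  let G : Finset (Fin (t+1)) → Prop := fun K => ∃ S : Fin (t+1) → Finset ℕ,
    (∀ i ∈ K, good i (S i)) ∧ (∀ i ∈ K, ∀ j ∈ K, i ≠ j → Disjoint (S i) (S j)) ∧
    ∀ i ∈ K, Disjoint (S i) ((I \ K).image v)
  have step : ∀ (K : Finset (Fin (t+1))) (i : Fin (t+1)), i ∉ K → G K →
      (∀ B₁ ⊆ V, B₁.card ≤ m * K.card → Disjoint B₁ ((I \ K).image v) →
        ∃ S, good i S ∧ Disjoint S (B₁ ∪ (I \ insert i K).image v)) → G (insert i K) := by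
    rintro K i hi ⟨S, h1, h2, h3⟩ hex
    obtain ⟨T, hT, hTd⟩ := hex (K.biUnion S)
      (Finset.biUnion_subset.mpr fun j hj => (hgood j _ (h1 j hj)).1)
      (by
        rw [mul_comm]
        exact Finset.card_biUnion_le_card_mul _ _ _ fun j hj => (hgood j _ (h1 j hj)).2.le)
      ((Finset.disjoint_biUnion_left _ _ _).mpr h3)
    obtain ⟨hT1, hT2⟩ := Finset.disjoint_union_right.mp hTd
    have hT1 := (Finset.disjoint_biUnion_right _ _ _).mp hT1
    have hne : ∀ j ∈ K, j ≠ i := fun j hj h => hi (h ▸ hj)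
    refine ⟨Function.update S i T, ?_, ?_, ?_⟩
    · intro j hj
      rcases Finset.mem_insert.mp hj with rfl | hj'
      · rw [Function.update_self]; exact hT
      · rw [Function.update_of_ne (hne j hj')]; exact h1 j hj'
    · intro a ha b hb hab
      rcases Finset.mem_insert.mp ha with rfl | ha'
      · rcases Finset.mem_insert.mp hb with rfl | hb'
        · exact absurd rfl hab
        · rw [Function.update_self, Function.update_of_ne (hne b hb')]
          exact hT1 b hb'
      · rcases Finset.mem_insert.mp hb with rfl | hb'
        · rw [Function.update_self, Function.update_of_ne (hne a ha')]
          exact (hT1 a ha').symm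
        · rw [Function.update_of_ne (hne a ha'), Function.update_of_ne (hne b hb')]
          exact h2 a ha' b hb' hab
    · intro j hj
      rcases Finset.mem_insert.mp hj with rfl | hj'
      · rw [Function.update_self]; exact hT2
      · rw [Function.update_of_ne (hne j hj')]
        exact (h3 j hj').mono_right (Finset.image_subset_image
          (Finset.sdiff_subset_sdiff le_rfl (Finset.subset_insert _ _)))
  have hG0 : G ∅ := ⟨fun _ => ∅, by simp, by simp, by simp⟩
  -- first stage
  have hG1 : ∀ K : Finset (Fin (t+1)), Disjoint K I → G K := by
    intro K
    induction K using Finset.induction_on with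
    | empty => intro _; exact hG0
    | insert i K hi ih =>
      intro hd
      rw [Finset.disjoint_insert_left] at hd
      apply step K i hi (ih hd.2)
      intro B₁ hB₁ hc hdis
      rw [Finset.sdiff_eq_self_of_disjoint hd.2.symm] at hdis
      have hd' : Disjoint I (insert i K) :=
        (Finset.disjoint_insert_left.mpr hd).symm
      rw [Finset.sdiff_eq_self_of_disjoint hd', Finset.union_comm]
      apply hA i hd.1 B₁ hB₁ hdis
      refine hc.trans (Nat.mul_le_mul_left _ ?_)
      have h1 : (I ∪ insert i K).card ≤ t + 1 := by
        simpa using Finset.card_le_univ (I ∪ insert i K)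
      rw [Finset.card_union_of_disjoint hd', Finset.card_insert_of_notMem hi] at h1
      omega
  have hG2 : ∀ K' : Finset (Fin (t+1)), K' ⊆ I → G (Iᶜ ∪ K') := by
    intro K'
    induction K' using Finset.induction_on with
    | empty =>
      intro _
      rw [Finset.union_empty]
      exact hG1 _ disjoint_compl_left
    | insert i K' hi ih =>
      intro hsub
      rw [Finset.insert_subset_iff] at hsub
      rw [Finset.union_insert]
      have hiK : i ∉ Iᶜ ∪ K' := by simp [hi, hsub.1]
      apply step _ i hiK (ih hsub.2)
      intro B₁ hB₁ hc hdis
      have hvi : v i ∉ B₁ := by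
        intro h
        exact Finset.disjoint_left.mp hdis h (Finset.mem_image_of_mem v
          (Finset.mem_sdiff.mpr ⟨hsub.1, hiK⟩))
      apply hB i hsub.1
      · apply Finset.union_subset hB₁
        intro x hx
        obtain ⟨j, hj, rfl⟩ := Finset.mem_image.mp hx
        exact hvV j (Finset.mem_sdiff.mp hj).1
      · intro h
        rcases Finset.mem_union.mp h with h | h
        · exact hvi h
        · obtain ⟨j, hj, hji⟩ := Finset.mem_image.mp h
          have hj := Finset.mem_sdiff.mp hj
          have := hinj hj.1 hsub.1 hji
          exact hj.2 (this ▸ Finset.mem_insert_self _ _)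
      · have h1 : (I \ insert i (Iᶜ ∪ K')).card + (insert i (Iᶜ ∪ K')).card ≤ t + 1 := by
          rw [← Finset.card_union_of_disjoint Finset.sdiff_disjoint]
          simpa using Finset.card_le_univ ((I \ insert i (Iᶜ ∪ K')) ∪ (insert i (Iᶜ ∪ K')))
        rw [Finset.card_insert_of_notMem hiK] at h1
        calc _ ≤ _ := Finset.card_union_le _ _
          _ ≤ m * (Iᶜ ∪ K').card + (I \ insert i (Iᶜ ∪ K')).card :=
            Nat.add_le_add hc Finset.card_image_le
          _ ≤ m * (Iᶜ ∪ K').card + m * (I \ insert i (Iᶜ ∪ K')).card :=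
            Nat.add_le_add_left (Nat.le_mul_of_pos_left _ hm) _
          _ = m * ((Iᶜ ∪ K').card + (I \ insert i (Iᶜ ∪ K')).card) := by ring
          _ ≤ m * t := Nat.mul_le_mul_left _ (by omega)
  obtain ⟨S, h1, h2, -⟩ := hG2 I le_rfl
  have huniv : Iᶜ ∪ I = Finset.univ := by
    rw [Finset.union_comm]; exact Finset.union_compl I
  rw [huniv] at h1 h2
  exact ⟨S, fun i => h1 i (Finset.mem_univ _), fun i j h => h2 i (Finset.mem_univ _) j
    (Finset.mem_univ _) h⟩

theorem combine {r t n m : ℕ} (hr : 2 ≤ r) (hm : 1 ≤ m) (F : HGraph r) (hF : F.verts.card = m)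
    (hmt : m * t + 1 ≤ n) (f1 f2 D : ℝ)
    (hD : D = dN r (n - m * t) F + f2 + ((m * t : ℕ) : ℝ) * (n-2).choose (r-2))
    (hbd : BoundedAt r (n - m * t) F f1 f2)
    (hA : ∀ s ≤ t, (exN r (n - (t - s) - m * s) F : ℝ) + ((m * s : ℕ) : ℝ) * D + (n-t).choose r
      ≤ (n - (t - s)).choose r + exN r (n - t) F)
    (hB : (exN r (n - m * t) F : ℝ) + ((m * t : ℕ) : ℝ) * (n-1).choose (r-1)
      ≤ exN r (n - t) F + f1 * ((n - m * t : ℕ) : ℝ) / r)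
    (H : Fin (t+1) → HGraph r) (hV : ∀ i j, (H i).verts = (H j).verts)
    (hn : ∀ i, (H i).verts.card = n)
    (hbig : ∀ i, n.choose r - (n - t).choose r + exN r (n - t) F < (H i).edges.card) :
    HasRainbowMatching r t F H := by
  have hle : (n-t).choose r ≤ n.choose r := Nat.choose_le_choose _ (Nat.sub_le _ _)
  have hbig' : ∀ i, (n.choose r : ℝ) + exN r (n-t) F < (H i).edges.card + (n-t).choose r := by
    intro i
    have := hbig i
    have h2 : n.choose r + exN r (n-t) F < (H i).edges.card + (n-t).choose r := by omega
    exact_mod_cast h2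
  obtain ⟨I, v, hinj, hP, hmax⟩ := exists_max_sdr
    (fun (i : Fin (t+1)) u => u ∈ (H 0).verts ∧ D < ((H i).deg u : ℝ))
  obtain ⟨S, hS, hdis⟩ := greedy hm
    (fun i S => S ⊆ (H i).verts ∧ S.card = F.verts.card ∧ F.IsCopyIn ((H i).induce S))
    (H 0).verts (fun i S h => ⟨(hV i 0) ▸ h.1, h.2.1.trans hF⟩) I v hinj
    (fun i hi => (hP i hi).1)
    (by
      intro i hi B hBV hBd hBc
      have hIc : I.card ≤ t := by
        have h1 : (insert i I).card ≤ t + 1 := by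
          simpa using Finset.card_le_univ (insert i I)
        rw [Finset.card_insert_of_notMem hi] at h1
        omega
      have hl : (I.image v).card = I.card := Finset.card_image_of_injOn hinj
      have hts : t - (t - I.card) = I.card := by omega
      have hAs := hA (t - I.card) (Nat.sub_le _ _)
      rw [hts] at hAs
      obtain ⟨S, h1, h2, h3, h4⟩ := stepA (n := n) (l := I.card) (k := m * (t - I.card)) F (H i)
        (hn i) (I.image v) B
        (by
          rw [hV i 0]
          intro x hx
          obtain ⟨j, hj, rfl⟩ := Finset.mem_image.mp hx
          exact (hP j hj).1) hl (by rw [hV i 0]; exact hBV) hBd hBc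
        (by
          have : I.card + m * (t - I.card) ≤ m * t := by
            calc _ ≤ m * I.card + m * (t - I.card) :=
                  Nat.add_le_add_right (Nat.le_mul_of_pos_left _ hm) _
              _ = m * (I.card + (t - I.card)) := by ring
              _ = m * t := by rw [Nat.add_sub_cancel' hIc]
          omega) D
        (by
          intro u hu huL
          by_contra hcon
          exact huL (hmax i hi u ⟨(hV i 0) ▸ hu, not_le.mp hcon⟩))
        (by
          have := hbig' i
          linarith)
      exact ⟨S, ⟨h1, h3, h4⟩, h2⟩)
    (by
      intro i hi B hBV hvB hBc
      obtain ⟨S, h1, h2, h3, h4⟩ := stepB hr F (H i) (hn i) B (by rw [hV i 0]; exact hBV) hBc hmt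
        (v i) (by rw [hV i 0]; exact (hP i hi).1) hvB f1 f2 hbd
        (by rw [← hD]; exact (hP i hi).2)
        (by
          have := hbig' i
          have h5 : ((n-t).choose r : ℝ) ≤ n.choose r := by exact_mod_cast hle
          linarith)
      exact ⟨S, ⟨h1, h3, h4⟩, h2⟩)
  exact ⟨S, fun i => ⟨(hS i).1, (hS i).2.1⟩, hdis, fun i => (hS i).2.2⟩

theorem choose_drop (n q j : ℕ) (hj : j ≤ n) :
    n.choose (q+1) ≤ (n-j).choose (q+1) + j * (n-1).choose q := by
  induction j with
  | zero => simp
  | succ j ih =>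
    have h1 := ih (by omega)
    obtain ⟨k, hk⟩ : ∃ k, n - j = k + 1 := ⟨n - j - 1, by omega⟩
    have hk2 : n - (j+1) = k := by omega
    rw [hk, Nat.choose_succ_succ'] at h1
    rw [hk2]
    have h2 : k.choose q ≤ (n-1).choose q := Nat.choose_le_choose _ (by omega)
    have h3 : (j+1) * (n-1).choose q = j * (n-1).choose q + (n-1).choose q := by ring
    omega

theorem choose_rise (a q s : ℕ) :
    s * a.choose q + a.choose (q+1) ≤ (a+s).choose (q+1) := by
  induction s with
  | zero => simp
  | succ s ih =>
    rw [← Nat.add_assoc, Nat.choose_succ_succ']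
    have h2 : a.choose q ≤ (a+s).choose q := Nat.choose_le_choose _ (by omega)
    have h3 : (s+1) * a.choose q = s * a.choose q + a.choose q := by ring
    omega

theorem choose_mul (n q : ℕ) (hn : 1 ≤ n) :
    (n : ℝ) * (n-1).choose q = (q+1) * n.choose (q+1) := by
  obtain ⟨k, rfl⟩ : ∃ k, n = k + 1 := ⟨n - 1, by omega⟩
  have := Nat.add_one_mul_choose_eq k q
  rw [Nat.add_sub_cancel]
  have h2 : (((k+1) * k.choose q : ℕ) : ℝ) = (((k+1).choose (q+1) * (q+1) : ℕ) : ℝ) := by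
    rw [this]
  push_cast at h2 ⊢
  linarith

theorem choose_drop_real (n q j : ℕ) (hj : j ≤ n) (hn : 1 ≤ n) (a : ℝ)
    (ha : (j : ℝ) * (q+1) ≤ a * n) :
    (1 - a) * n.choose (q+1) ≤ (n-j).choose (q+1) := by
  have h1 : (n.choose (q+1) : ℝ) ≤ (n-j).choose (q+1) + j * (n-1).choose q := by
    exact_mod_cast choose_drop n q j hj
  have h2 := choose_mul n q hn
  have hnp : (0:ℝ) < n := by exact_mod_cast hn
  have h3 : (j:ℝ) * (n-1).choose q ≤ a * n.choose (q+1) := by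
    have hM : (0:ℝ) ≤ n.choose (q+1) := by positivity
    have h4 := mul_le_mul_of_nonneg_right ha hM
    have h5 : (n:ℝ) * (j * (n-1).choose q) ≤ n * (a * n.choose (q+1)) := by
      calc (n:ℝ) * (j * (n-1).choose q) = j * (n * (n-1).choose q) := by ring
        _ = j * (q+1) * n.choose (q+1) := by rw [h2]; ring
        _ ≤ a * n * n.choose (q+1) := h4
        _ = _ := by ring
    exact le_of_mul_le_mul_left h5 hnp
  linarith

theorem ex_tele {r : ℕ} (F : HGraph r) (N p : ℕ) (x : ℝ)
    (h : ∀ i < p, x ≤ deltaN r (N - i) F) :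
    p * x ≤ (exN r N F : ℝ) - exN r (N - p) F := by
  induction p with
  | zero => simp
  | succ p ih =>
    have h1 := ih (fun i hi => h i (by omega))
    have h2 := h p (by omega)
    unfold deltaN at h2
    rw [Nat.sub_sub] at h2
    push_cast
    linarith

theorem final_ineq (m ε η a π : ℝ) (hm : 1 ≤ m) (hε : 0 < ε) (hπ : π = 1 - ε) (hη : 0 < η)
    (hηε : m * η ≤ ε / 64) (ha : a = ε / (64 * m) + η) (hπη : η ≤ π) :
    m * ((π + η) + ε / (4 * m) + ε / (64 * m)) ≤
      (1 - a) + (m - 1) * ((π - η) * (1 - a) - ε / (8 * m)) := by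
  have hm0 : 0 < m := by linarith
  have e1 : m * (ε / (64 * m)) = ε / 64 := by field_simp
  have e2 : m * (ε / (4 * m)) = ε / 4 := by field_simp
  have e3 : m * (ε / (8 * m)) = ε / 8 := by field_simp
  have ha0 : 0 ≤ a := by rw [ha]; positivity
  have hma : m * a ≤ ε / 32 := by rw [ha, mul_add, e1]; linarith
  have ha1 : a ≤ m * a := le_mul_of_one_le_left ha0 hm
  have hp : (π - η) * (1 - a) ≥ π - η - a := by
    have : (π - η) * a ≤ 1 * a := mul_le_mul_of_nonneg_right (by linarith) ha0
    nlinarith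
  have h8 : 0 ≤ ε / (8 * m) := by positivity
  have h5 : (m - 1) * ((π - η) * (1 - a) - ε / (8 * m)) ≥ (m-1) * (π - η - a - ε / (8*m)) :=
    mul_le_mul_of_nonneg_left (by linarith) (by linarith)
  nlinarith

theorem dN_bounds {p : ℕ} (F : HGraph (p+2)) (k : ℕ) (hk : 1 ≤ k) (x y : ℝ)
    (hx : x * k.choose (p+2) ≤ exN (p+2) k F) (hy : (exN (p+2) k F : ℝ) ≤ y * k.choose (p+2)) :
    x * (k-1).choose (p+1) ≤ dN (p+2) k F ∧ dN (p+2) k F ≤ y * (k-1).choose (p+1) := by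
  have h := choose_mul k (p+1) hk
  have hkp : (0:ℝ) < k := by exact_mod_cast hk
  have hr : (0:ℝ) ≤ (p:ℝ) + 2 := by positivity
  push_cast at h
  unfold dN
  push_cast
  constructor
  · rw [le_div_iff₀ hkp]
    have := mul_le_mul_of_nonneg_left hx hr
    calc x * ((k-1).choose (p+1) : ℝ) * k = x * (k * (k-1).choose (p+1)) := by ring
      _ = (p+2) * (x * k.choose (p+2)) := by rw [h]; ring
      _ ≤ _ := this
  · rw [div_le_iff₀ hkp]
    have := mul_le_mul_of_nonneg_left hy hr
    calc _ ≤ _ := this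
      _ = y * (k * (k-1).choose (p+1)) := by rw [h]; ring
      _ = _ := by ring

set_option maxHeartbeats 2000000 in
theorem analytic (m p : ℕ) (hrm : p + 2 ≤ m) (F : HGraph (p+2))
    (π ε : ℝ) (hε : ε = 1 - π) (hε0 : 0 < ε) (hπ0 : 0 < π) (c η a : ℝ) (hc : 0 < c)
    (hη : 0 < η) (hη1 : m * η ≤ ε / 64) (hη2 : η ≤ c / 16) (hη3 : η ≤ π)
    (ha : a = ε / (64 * m) + η) (n t N₁ : ℕ)
    (hN : ∀ k ≥ N₁, SmoothAt (p+2) k F (ε / (8 * m) * (k.choose (p+1) : ℝ)) ∧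
      (π - η) * k.choose (p+2) ≤ exN (p+2) k F ∧
      (exN (p+2) k F : ℝ) ≤ (π + η) * k.choose (p+2))
    (hnN : 2 * N₁ ≤ n) (hnr : 2 * (p + 2) ≤ n) (hnη : (p + 2 : ℝ) ≤ η * n)
    (ht1 : ((m * t : ℕ) : ℝ) * (8 * (p+2)) ≤ c * n)
    (ht2 : ((m * t : ℕ) : ℝ) * (p+2) ≤ ε / (64 * m) * n)
    (f2 D : ℝ) (hf2 : f2 = ε / (4 * m) * ((n - m * t).choose (p+1) : ℝ))
    (hD : D = dN (p+2) (n - m * t) F + f2 + ((m * t : ℕ) : ℝ) * (n-2).choose p) :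
    N₁ ≤ n - m * t ∧ m * t + 1 ≤ n ∧
    (∀ s ≤ t, (exN (p+2) (n - (t - s) - m * s) F : ℝ) + ((m * s : ℕ) : ℝ) * D
        + (n-t).choose (p+2) ≤ (n - (t - s)).choose (p+2) + exN (p+2) (n - t) F) ∧
    (exN (p+2) (n - m * t) F : ℝ) + ((m * t : ℕ) : ℝ) * (n-1).choose (p+1)
      ≤ exN (p+2) (n - t) F
        + c * ((n - m * t).choose (p+1) : ℝ) * ((n - m * t : ℕ) : ℝ) / ((p+2 : ℕ) : ℝ) := by
  have hm1 : (1:ℝ) ≤ m := by exact_mod_cast (by omega : 1 ≤ m)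
  have hm0 : (0:ℝ) < m := by linarith
  have hn1 : 1 ≤ n := by omega
  have hn0 : (0:ℝ) < n := by exact_mod_cast hn1
  have hp0 : (0:ℝ) ≤ p := by positivity
  have hε1 : ε < 1 := by linarith
  have hE0 : 0 < ε / (64 * m) := by positivity
  have hE : m * (ε / (64 * m)) = ε / 64 := by field_simp
  have hE1 : ε / (64 * m) ≤ ε / 64 := by
    rw [← hE]; exact le_mul_of_one_le_left hE0.le hm1
  have hηm : η ≤ m * η := le_mul_of_one_le_left hη.le hm1
  have ha0 : 0 < a := by rw [ha]; positivity
  have ha2 : a ≤ 1 / 2 := by rw [ha]; linarith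
  set X : ℝ := ((m * t : ℕ) : ℝ) with hX
  have hX0 : 0 ≤ X := by rw [hX]; positivity
  have hXn : X * 4 ≤ n := by
    have h1 : ε / (64 * m) * n ≤ 1 * n := mul_le_mul_of_nonneg_right (by linarith) hn0.le
    have h2 : ε / (64 * m) * n ≤ (1/2) * n := mul_le_mul_of_nonneg_right (by linarith) hn0.le
    have h3 : X * 2 ≤ X * (p+2) := mul_le_mul_of_nonneg_left (by linarith) hX0
    linarith
  have hXnat : m * t * 4 ≤ n := by
    have : ((m * t * 4 : ℕ) : ℝ) ≤ n := by
      rw [Nat.cast_mul]; exact hXn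
    exact_mod_cast this
  have htm : t ≤ m * t := Nat.le_mul_of_pos_left _ (by omega)
  set k₀ := n - m * t with hk₀
  have hk₀N : N₁ ≤ k₀ := by omega
  have hk₀1 : 1 ≤ k₀ := by omega
  set M : ℝ := (n.choose (p+1) : ℝ) with hM
  have hM0 : 0 ≤ M := by rw [hM]; positivity
  have hup : ∀ k ≤ n, ((k.choose (p+1) : ℕ) : ℝ) ≤ M := by
    intro k hk
    rw [hM]
    exact_mod_cast Nat.choose_le_choose _ hk
  have hlow : ∀ k, k₀ ≤ k + 1 → (1 - a) * M ≤ ((k.choose (p+1) : ℕ) : ℝ) := by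
    intro k hk
    have h1 := choose_drop_real n p (m * t + 1) (by omega) hn1 a (by
      push_cast
      rw [ha, add_mul]
      have hXX : X = (m:ℝ) * t := by rw [hX]; push_cast; ring
      rw [← hXX]
      nlinarith)
    refine h1.trans ?_
    exact_mod_cast Nat.choose_le_choose _ (by omega : n - (m * t + 1) ≤ k)
  have hdlow : ∀ k, k₀ ≤ k → k ≤ n → (π - η) * (1 - a) * M ≤ dN (p+2) k F := by
    intro k hk hkn
    obtain ⟨-, h2, h3⟩ := hN k (by omega)
    have h4 := (dN_bounds F k (by omega) _ _ h2 h3).1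
    have h5 := mul_le_mul_of_nonneg_left (hlow (k-1) (by omega)) (by linarith : 0 ≤ π - η)
    linarith
  have hdup : dN (p+2) k₀ F ≤ (π + η) * M := by
    obtain ⟨-, h2, h3⟩ := hN k₀ hk₀N
    have h4 := (dN_bounds F k₀ hk₀1 _ _ h2 h3).2
    have h5 := mul_le_mul_of_nonneg_left (hup (k₀-1) (by omega)) (by linarith : 0 ≤ π + η)
    linarith
  have hXc : X * (n-2).choose p ≤ ε / (64 * m) * M := by
    have h1 := choose_mul (n-1) p (by omega)
    have h11 : n - 1 - 1 = n - 2 := by omega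
    rw [h11, Nat.cast_sub hn1] at h1
    push_cast at h1
    have h2 := hup (n-1) (by omega)
    have hnn : (2:ℝ) * (p+2) ≤ n := by exact_mod_cast hnr
    have hn2 : (0:ℝ) < n - 1 := by linarith
    have h3 : X * (p+1) ≤ ε / (64 * m) * (n - 1) := by
      have h4 : X * (p+2) * (p+1) ≤ ε / (64 * m) * n * (p+1) :=
        mul_le_mul_of_nonneg_right ht2 (by linarith)
      have h5 : ε / (64 * m) * (n * (p+1)) ≤ ε / (64 * m) * ((n-1) * (p+2)) :=
        mul_le_mul_of_nonneg_left (by linarith) hE0.le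
      have h6 : (X * (p+1)) * (p+2) ≤ (ε / (64 * m) * (n - 1)) * (p+2) := by linarith
      exact le_of_mul_le_mul_right h6 (by linarith)
    have h7 : ((n:ℝ) - 1) * (X * (n-2).choose p) ≤ (n - 1) * (ε / (64 * m) * M) := by
      calc ((n:ℝ) - 1) * (X * (n-2).choose p) = X * ((n-1) * (n-2).choose p) := by ring
        _ = X * (p+1) * (n-1).choose (p+1) := by rw [h1]; ring
        _ ≤ X * (p+1) * M := mul_le_mul_of_nonneg_left h2 (by positivity)
        _ ≤ ε / (64 * m) * (n - 1) * M := mul_le_mul_of_nonneg_right h3 hM0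
        _ = _ := by ring
    exact le_of_mul_le_mul_left h7 hn2
  have hDle : D ≤ ((π + η) + ε / (4 * m) + ε / (64 * m)) * M := by
    have h1 : f2 ≤ ε / (4 * m) * M := by
      rw [hf2]
      exact mul_le_mul_of_nonneg_left (hup k₀ (by omega)) (by positivity)
    rw [hD]
    linarith
  refine ⟨hk₀N, by omega, ?_, ?_⟩
  · intro s hs
    obtain ⟨m', hm'⟩ : ∃ m', m = m' + 1 := ⟨m - 1, by omega⟩
    have hms : m * s = m' * s + s := by rw [hm']; ring
    have hmt : m * t = m' * t + t := by rw [hm']; ring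
    have hst : m' * s ≤ m' * t := Nat.mul_le_mul_left _ hs
    have hmr : (m' : ℝ) = m - 1 := by rw [hm']; push_cast; ring
    have e1 : n - (t - s) = n - t + s := by omega
    have e2 : n - (t - s) - m * s = n - t - m' * s := by omega
    rw [e2, e1]
    have h1 := ex_tele F (n - t) (m' * s) ((π - η) * (1 - a) * M - ε / (8 * m) * M) (by
      intro i hi
      have hsm := (hN (n - t - i) (by omega)).1
      unfold SmoothAt at hsm
      have h2 := (abs_le.mp hsm).1
      have h3 := hdlow (n - t - i - 1) (by omega) (by omega)
      have h4 : ε / (8 * m) * ((n - t - i).choose (p+1) : ℝ) ≤ ε / (8 * m) * M :=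
        mul_le_mul_of_nonneg_left (hup _ (by omega)) (by positivity)
      linarith)
    have h2 : (s : ℝ) * (n-t).choose (p+1) + (n-t).choose (p+2) ≤ (n-t+s).choose (p+2) := by
      exact_mod_cast choose_rise (n-t) (p+1) s
    have h3 := hlow (n-t) (by omega)
    have hs0 : (0:ℝ) ≤ s := by positivity
    have h4 := mul_le_mul_of_nonneg_left h3 hs0
    have h5 := final_ineq m ε η a π hm1 hε0 (by linarith) hη hη1 ha hη3
    have h6 := mul_le_mul_of_nonneg_left h5 (mul_nonneg hs0 hM0)
    have h7 := mul_le_mul_of_nonneg_left hDle (mul_nonneg hm0.le hs0)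
    push_cast at h1 ⊢
    rw [hmr] at h1
    linarith
  · obtain ⟨-, -, h1⟩ := hN k₀ hk₀N
    obtain ⟨-, h2, -⟩ := hN (n - t) (by omega)
    have h3 : (k₀.choose (p+2) : ℝ) ≤ (n-t).choose (p+2) := by
      exact_mod_cast Nat.choose_le_choose _ (by omega : k₀ ≤ n - t)
    have h4 : ((n-t).choose (p+2) : ℝ) ≤ n.choose (p+2) := by
      exact_mod_cast Nat.choose_le_choose _ (by omega : n - t ≤ n)
    have h3' := mul_le_mul_of_nonneg_left h3 (by linarith : 0 ≤ π + η)
    have h4' := mul_le_mul_of_nonneg_left h4 (by linarith : 0 ≤ 2 * η)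
    have h5 := choose_mul n (p+1) hn1
    push_cast at h5
    have h6 := hup (n-1) (by omega)
    have h7 := mul_le_mul_of_nonneg_left h6 hn0.le
    have h8 : M / 2 ≤ (k₀.choose (p+1) : ℝ) := by
      have := hlow k₀ (by omega)
      have h9 : (1/2) * M ≤ (1 - a) * M := mul_le_mul_of_nonneg_right (by linarith) hM0
      linarith
    have h9 : (n:ℝ) / 2 ≤ k₀ := by
      have : (n:ℝ) ≤ 2 * k₀ := by exact_mod_cast (by omega : n ≤ 2 * k₀)
      linarith
    have h10 : M / 2 * (n / 2) ≤ (k₀.choose (p+1) : ℝ) * k₀ :=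
      mul_le_mul h8 h9 (by positivity) (by positivity)
    have hr0 : (0:ℝ) < ((p+2 : ℕ) : ℝ) := by positivity
    have h11 : (2 * η * n.choose (p+2) + X * M) ≤
        c * (k₀.choose (p+1) : ℝ) * (k₀ : ℝ) / ((p+2 : ℕ) : ℝ) := by
      rw [le_div_iff₀ hr0]
      push_cast
      have g1 : 2 * η * (n * M) ≤ c / 8 * (n * M) :=
        mul_le_mul_of_nonneg_right (by linarith) (by positivity)
      have g2 := mul_le_mul_of_nonneg_right ht1 hM0
      have g3 := mul_le_mul_of_nonneg_left h10 hc.le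
      have g4 := mul_le_mul_of_nonneg_left h7 (by linarith : 0 ≤ 2 * η)
      rw [h5] at g4
      linarith
    have h12 := mul_le_mul_of_nonneg_left h6 hX0
    linarith

theorem rainbow_zero {r n : ℕ} (F : HGraph r) (H : Fin (0+1) → HGraph r)
    (hn : ∀ i, (H i).verts.card = n) (hbig : ∀ i, exN r n F < (H i).edges.card) :
    HasRainbowMatching r 0 F H := by
  have hex : ∀ i, ∃ S : Finset ℕ, S ⊆ (H i).verts ∧ S.card = F.verts.card ∧
      F.IsCopyIn ((H i).induce S) := by
    intro i
    by_cases hc : F.IsCopyIn ((H i).rest ∅)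
    · obtain ⟨S, h1, _, h3, h4⟩ := HGraph.copy_rest F (H i) _ hc
      exact ⟨S, h1, h3, h4⟩
    · exfalso
      have h1 := le_exN (n := n) F _ (by rw [HGraph.rest_verts, Finset.sdiff_empty, hn]) hc
      rw [HGraph.rest_empty_card] at h1
      have := hbig i
      omega
  choose S h1 h2 h3 using hex
  refine ⟨S, fun i => ⟨h1 i, h2 i⟩, ?_, h3⟩
  intro i j hij
  exact absurd (Fin.ext (by omega)) hij

/-- the rainbow version of the main theorem. -/
theorem statement_1 (m r : ℕ) (hr : 2 ≤ r) (hrm : r ≤ m)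
    (F : HGraph r) (hFm : F.verts.card = m)
    (π : ℝ) (hπ : HasTuranDensity r F π) (hπ0 : 0 < π)
    (c : ℝ) (hc : 0 < c)
    (hcond : ∀ᶠ n : ℕ in atTop,
      BoundedAt r n F (c * (n.choose (r-1) : ℝ))
        ((1 - π) / (4 * m) * (n.choose (r-1) : ℝ)) ∧
      SmoothAt r n F ((1 - π) / (8 * m) * (n.choose (r-1) : ℝ))) :
    ∃ N₀ : ℕ, ∀ n : ℕ, N₀ ≤ n → ∀ t : ℕ,
      (t : ℝ) ≤ min (c * n / (4 * Real.exp 1 * r * m)) ((1 - π) * n / (64 * r * m ^ 2)) →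
      ∀ H : Fin (t+1) → HGraph r,
        (∀ i j, (H i).verts = (H j).verts) →
        (∀ i, (H i).verts.card = n) →
        (∀ i, n.choose r - (n - t).choose r + exN r (n - t) F < (H i).edges.card) →
        HasRainbowMatching r t F H := by
  obtain ⟨p, rfl⟩ : ∃ p, r = p + 2 := ⟨r - 2, by omega⟩
  have hm1 : (1:ℝ) ≤ m := by exact_mod_cast (by omega : 1 ≤ m)
  have hm0 : (0:ℝ) < m := by linarith
  rcases le_or_gt (1 - π) 0 with hε | hε
  · refine ⟨0, fun n _ t ht H hV hn hbig => ?_⟩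
    have h1 := ht.trans (min_le_right _ _)
    have h2 : (1 - π) * n / (64 * ((p+2 : ℕ) : ℝ) * m ^ 2) ≤ 0 := by
      apply div_nonpos_of_nonpos_of_nonneg
      · exact mul_nonpos_of_nonpos_of_nonneg hε (by positivity)
      · positivity
    have h3 : t = 0 := by
      have : (t:ℝ) ≤ 0 := h1.trans h2
      have : t ≤ 0 := by exact_mod_cast this
      omega
    subst h3
    apply rainbow_zero F H hn
    intro i
    have := hbig i
    simpa using this
  · set ε := 1 - π with hεdef
    obtain ⟨η, hη, hη1, hη2, hη3⟩ : ∃ η : ℝ, 0 < η ∧ m * η ≤ ε / 64 ∧ η ≤ c / 16 ∧ η ≤ π := by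
      refine ⟨min (ε / (64 * m)) (min (c / 16) π), ?_, ?_, ?_, ?_⟩
      · exact lt_min (by positivity) (lt_min (by positivity) hπ0)
      · have h1 := mul_le_mul_of_nonneg_left (min_le_left (ε / (64 * m)) (min (c / 16) π)) hm0.le
        have hE : m * (ε / (64 * m)) = ε / 64 := by field_simp
        linarith
      · exact (min_le_right _ _).trans (min_le_left _ _)
      · exact (min_le_right _ _).trans (min_le_right _ _)
    have hlim : ∀ᶠ k : ℕ in atTop, (π - η) * k.choose (p+2) ≤ exN (p+2) k F ∧
        (exN (p+2) k F : ℝ) ≤ (π + η) * k.choose (p+2) := by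
      have h1 := Metric.tendsto_nhds.mp hπ η hη
      filter_upwards [h1, eventually_ge_atTop (p+2)] with k hk hkp
      have hpos : (0:ℝ) < k.choose (p+2) := by exact_mod_cast Nat.choose_pos hkp
      rw [Real.dist_eq, abs_lt] at hk
      constructor
      · rw [← le_div_iff₀ hpos]; linarith [hk.1]
      · rw [← div_le_iff₀ hpos]; linarith [hk.2]
    obtain ⟨N₁, hN₁⟩ := eventually_atTop.mp (hcond.and hlim)
    refine ⟨2 * N₁ + 2 * (p+2) + ⌈((p:ℝ) + 2) / η⌉₊, fun n hnN t ht H hV hn hbig => ?_⟩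
    have hnη : (p + 2 : ℝ) ≤ η * n := by
      have h1 : ((p:ℝ) + 2) / η ≤ n :=
        (Nat.le_ceil _).trans (by exact_mod_cast (by omega : ⌈((p:ℝ) + 2) / η⌉₊ ≤ n))
      rw [div_le_iff₀ hη] at h1
      linarith
    have hr0 : (0:ℝ) < (p:ℝ) + 2 := by positivity
    have ht1 : ((m * t : ℕ) : ℝ) * (8 * (p+2)) ≤ c * n := by
      have h1 := ht.trans (min_le_left _ _)
      rw [le_div_iff₀ (by positivity)] at h1
      push_cast at h1 ⊢
      have he : (2:ℝ) ≤ Real.exp 1 := by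
        have := Real.add_one_le_exp (1:ℝ)
        linarith
      have h2 : (m * t : ℝ) * (p+2) * 4 * 2 ≤ (m * t : ℝ) * (p+2) * 4 * Real.exp 1 :=
        mul_le_mul_of_nonneg_left he (by positivity)
      linarith
    have ht2 : ((m * t : ℕ) : ℝ) * (p+2) ≤ ε / (64 * m) * n := by
      have h1 := ht.trans (min_le_right _ _)
      rw [le_div_iff₀ (by positivity)] at h1
      push_cast at h1 ⊢
      rw [div_mul_eq_mul_div, le_div_iff₀ (by positivity)]
      linarith
    obtain ⟨g1, g2, g3, g4⟩ := analytic m p hrm F π ε hεdef hε hπ0 c η (ε / (64 * m) + η) hc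
      hη hη1 hη2 hη3 rfl n t N₁ (fun k hk => ⟨(hN₁ k hk).1.2, (hN₁ k hk).2⟩) (by omega) (by omega)
      hnη ht1 ht2 _ _ rfl rfl
    exact combine (by omega) (by omega) F hFm g2 _ _ _ rfl (hN₁ _ g1).1.1 g3 g4 H hV hn hbig

end DensityCH
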